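/- arXiv:2509.06360 — 3 statements merged into one kernel-verified Lean document; each statement's English description precedes it below -/
import Mathlib

section
/- For r > 0, define the trigonometric moments over the uniform distribution on [−r, r]: c_+ = (1/(2r))∫_{−r}^{r} cos⁴α dα, c_− = (1/(2r))∫_{−r}^{r} sin⁴α dα, c_0 = (1/(2r))∫_{−r}^{r} cos²α sin²α dα, k_+ = (1/(2r))∫_{−r}^{r} cos²α dα, k_− = (1/(2r))∫_{−r}^{r} sin²α dα. Then c_+ − k_+² = c_− − k_−² = −(c_0 − k_+k_−) = (−1 + 4r² + cos(4r) + r·sin(4r))/(32r²), and this common value is strictly positive for every r > 0. -/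
open intervalIntegral in
/-- The variance of `cos ^ 2` over `[-r, r]` is strictly positive. -/
lemma variance_cos_sq_pos (r : ℝ) (hr : 0 < r) :
    0 < ((1 / (2 * r)) * ∫ α in (-r)..r, Real.cos α ^ 4) -
        ((1 / (2 * r)) * ∫ α in (-r)..r, Real.cos α ^ 2) ^ 2 := by
  set k := (1 / (2 * r)) * ∫ α in (-r)..r, Real.cos α ^ 2 with hk
  have mean_lt_one : k < 1 := by
    have hs : Real.sin (2 * r) < 2 * r := Real.sin_lt (by linarith)
    rw [Real.sin_two_mul] at hs
    rw [hk, integral_cos_sq, Real.cos_neg, Real.sin_neg, one_div, inv_mul_lt_iff₀ (by linarith)]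
    linarith
  have integral_pos : 0 < ∫ α in (-r)..r, (Real.cos α ^ 2 - k) ^ 2 := by
    refine intervalIntegral.integral_pos (by linarith) (by fun_prop)
      (fun x _ => sq_nonneg _) ⟨0, ⟨by linarith, hr.le⟩, ?_⟩
    have : 0 < 1 - k := by linarith
    simpa using pow_pos this 2
  have expand : ∫ α in (-r)..r, (Real.cos α ^ 2 - k) ^ 2 =
      (∫ α in (-r)..r, Real.cos α ^ 4) - 2 * k * (∫ α in (-r)..r, Real.cos α ^ 2)
        + 2 * r * k ^ 2 := by
    have hpt : ∀ α, (Real.cos α ^ 2 - k) ^ 2 =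
        Real.cos α ^ 4 - 2 * k * Real.cos α ^ 2 + k ^ 2 := fun α => by ring
    simp_rw [hpt]
    rw [integral_add (Continuous.intervalIntegrable (by fun_prop) _ _)
        (Continuous.intervalIntegrable (by fun_prop) _ _),
      integral_sub (Continuous.intervalIntegrable (by fun_prop) _ _)
        (Continuous.intervalIntegrable (by fun_prop) _ _),
      integral_const_mul, integral_const, smul_eq_mul]
    ring
  have mean_mul : (∫ α in (-r)..r, Real.cos α ^ 2) = 2 * r * k := by
    rw [hk]; field_simp
  rw [expand, mean_mul] at integral_pos
  have : (1 / (2 * r)) * (∫ α in (-r)..r, Real.cos α ^ 4) - k ^ 2 =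
      (1 / (2 * r)) * ((∫ α in (-r)..r, Real.cos α ^ 4) - 2 * k * (2 * r * k)
        + 2 * r * k ^ 2) := by
    field_simp
    ring
  rw [this]
  positivity

/-- The trigonometric moments of the uniform distribution on `[−r, r]` satisfy
`c₊ − k₊² = c₋ − k₋² = −(c₀ − k₊k₋) = (−1 + 4r² + cos 4r + r sin 4r)/(32r²) > 0`. -/
theorem trig_moments_identity (r : ℝ) (hr : 0 < r) :
    ((1 / (2 * r)) * ∫ α in (-r)..r, Real.cos α ^ 4) -
        ((1 / (2 * r)) * ∫ α in (-r)..r, Real.cos α ^ 2) ^ 2 =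
      (-1 + 4 * r ^ 2 + Real.cos (4 * r) + r * Real.sin (4 * r)) / (32 * r ^ 2) ∧
    ((1 / (2 * r)) * ∫ α in (-r)..r, Real.sin α ^ 4) -
        ((1 / (2 * r)) * ∫ α in (-r)..r, Real.sin α ^ 2) ^ 2 =
      (-1 + 4 * r ^ 2 + Real.cos (4 * r) + r * Real.sin (4 * r)) / (32 * r ^ 2) ∧
    -(((1 / (2 * r)) * ∫ α in (-r)..r, Real.cos α ^ 2 * Real.sin α ^ 2) -
        ((1 / (2 * r)) * ∫ α in (-r)..r, Real.cos α ^ 2) *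
          ((1 / (2 * r)) * ∫ α in (-r)..r, Real.sin α ^ 2)) =
      (-1 + 4 * r ^ 2 + Real.cos (4 * r) + r * Real.sin (4 * r)) / (32 * r ^ 2) ∧
    0 < (-1 + 4 * r ^ 2 + Real.cos (4 * r) + r * Real.sin (4 * r)) / (32 * r ^ 2) := by
  have cos_four : Real.cos (4 * r) = 1 - 8 * Real.sin r ^ 2 * Real.cos r ^ 2 := by
    rw [show 4 * r = 2 * (2 * r) by ring, Real.cos_two_mul, Real.cos_two_mul, Real.sin_sq]
    ring
  have sin_four : Real.sin (4 * r) =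
      4 * Real.sin r * Real.cos r * (2 * Real.cos r ^ 2 - 1) := by
    rw [show 4 * r = 2 * (2 * r) by ring, Real.sin_two_mul, Real.sin_two_mul, Real.cos_two_mul]
    ring
  have cos_moment : ((1 / (2 * r)) * ∫ α in (-r)..r, Real.cos α ^ 4) -
        ((1 / (2 * r)) * ∫ α in (-r)..r, Real.cos α ^ 2) ^ 2 =
      (-1 + 4 * r ^ 2 + Real.cos (4 * r) + r * Real.sin (4 * r)) / (32 * r ^ 2) := by
    rw [integral_cos_pow 2, integral_cos_sq, cos_four, sin_four, Real.cos_neg, Real.sin_neg]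
    push_cast
    field_simp
    ring
  refine ⟨cos_moment, ?_, ?_, cos_moment ▸ variance_cos_sq_pos r hr⟩
  · have sin_cube : Real.sin r ^ 3 = Real.sin r * (1 - Real.cos r ^ 2) := by
      rw [← Real.sin_sq]
      ring
    rw [integral_sin_pow 2, integral_sin_sq, cos_four, sin_four, Real.cos_neg, Real.sin_neg]
    push_cast
    field_simp
    ring_nf
    rw [sin_cube]
    ring
  · simp_rw [mul_comm (Real.cos _ ^ 2) (Real.sin _ ^ 2)]
    rw [integral_sin_sq_mul_cos_sq, integral_cos_sq, integral_sin_sq, mul_neg, Real.sin_neg,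
      cos_four, sin_four, Real.cos_neg, Real.sin_neg]
    field_simp
    ring
end

section
/- For 0 < r ≤ 1, the quantity (−1 + 4r² + cos(4r) + r·sin(4r))/(32r²) is bounded below by (4r⁴/45)·(1 − 4r²/7). -/
open Finset Nat in
/-- The Taylor polynomial of `cos` with `n + 1` terms differentiates to minus that of `sin` with `n`
terms. -/
lemma hasDerivAt_cos_taylor (n : ℕ) (x : ℝ) :
    HasDerivAt (fun y : ℝ => ∑ k ∈ range (n + 1), (-1) ^ k * y ^ (2 * k) / (2 * k)!)
      (-∑ k ∈ range n, (-1) ^ k * x ^ (2 * k + 1) / (2 * k + 1)!) x := by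
  simp_rw [sum_range_succ' _ n, ← sum_neg_distrib, mul_zero, pow_zero]
  apply HasDerivAt.add_const
  refine HasDerivAt.fun_sum fun k _ => ?_
  convert! ((hasDerivAt_pow (2 * (k + 1)) x).const_mul ((-1 : ℝ) ^ (k + 1))).div_const
    ((2 * (k + 1))! : ℝ) using 1
  rw [show 2 * (k + 1) = 2 * k + 1 + 1 by ring, Nat.factorial_succ (2 * k + 1)]
  have : ((2 * k + 1)! : ℝ) ≠ 0 := by positivity
  have : (2 * (k : ℝ) + 1 + 1) ≠ 0 := by positivity
  push_cast
  field_simp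
  ring

open Finset Nat in
/-- The Taylor polynomial of `sin` with `n` terms differentiates to that of `cos`. -/
lemma hasDerivAt_sin_taylor (n : ℕ) (x : ℝ) :
    HasDerivAt (fun y : ℝ => ∑ k ∈ range n, (-1) ^ k * y ^ (2 * k + 1) / (2 * k + 1)!)
      (∑ k ∈ range n, (-1) ^ k * x ^ (2 * k) / (2 * k)!) x := by
  refine HasDerivAt.fun_sum fun k _ => ?_
  convert! ((hasDerivAt_pow (2 * k + 1) x).const_mul ((-1 : ℝ) ^ k)).div_const
    ((2 * k + 1)! : ℝ) using 1
  rw [Nat.factorial_succ (2 * k)]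
  have : ((2 * k)! : ℝ) ≠ 0 := by positivity
  have : (2 * (k : ℝ) + 1) ≠ 0 := by positivity
  push_cast
  field_simp

lemma nonneg_of_hasDerivAt_nonneg {f f' : ℝ → ℝ} (hf : ∀ x, HasDerivAt f (f' x) x)
    (hf' : ∀ x, 0 ≤ x → 0 ≤ f' x) (h0 : f 0 = 0) {x : ℝ} (hx : 0 ≤ x) : 0 ≤ f x := by
  have hmono : MonotoneOn f (Set.Ici 0) :=
    monotoneOn_of_hasDerivWithinAt_nonneg (convex_Ici 0)
      (fun y _ => (hf y).continuousAt.continuousWithinAt)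
      (fun y _ => (hf y).hasDerivWithinAt)
      (fun y hy => hf' y (interior_subset hy))
  simpa [h0] using hmono Set.self_mem_Ici hx hx

open Finset Nat in
/-- The sign of the Taylor remainder of `sin` follows from that of `cos`. -/
lemma sin_taylor_remainder_sign_of_cos {n : ℕ}
    (h : ∀ x : ℝ, 0 ≤ x →
      0 ≤ (-1) ^ n * (Real.cos x - ∑ k ∈ range n, (-1) ^ k * x ^ (2 * k) / (2 * k)!))
    {x : ℝ} (hx : 0 ≤ x) :
    0 ≤ (-1) ^ n *
      (Real.sin x - ∑ k ∈ range n, (-1) ^ k * x ^ (2 * k + 1) / (2 * k + 1)!) :=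
  nonneg_of_hasDerivAt_nonneg
    (fun y => ((Real.hasDerivAt_sin y).sub (hasDerivAt_sin_taylor n y)).const_mul ((-1) ^ n))
    h (by simp) hx

open Finset Nat in
/-- On `[0, ∞)`, the error of the Taylor polynomial of `cos` with `n + 1` terms has the sign
of the first omitted term. -/
lemma cos_taylor_remainder_sign (n : ℕ) {x : ℝ} (hx : 0 ≤ x) :
    0 ≤ (-1) ^ (n + 1) *
      (Real.cos x - ∑ k ∈ range (n + 1), (-1) ^ k * x ^ (2 * k) / (2 * k)!) := by
  induction n generalizing x with
  | zero => simpa using Real.cos_le_one x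
  | succ n ih =>
    refine nonneg_of_hasDerivAt_nonneg
      (fun y => ((Real.hasDerivAt_cos y).sub (hasDerivAt_cos_taylor (n + 1) y)).const_mul
        ((-1) ^ (n + 1 + 1))) (fun y hy => ?_) (by simp [sum_range_succ']) hx
    have := sin_taylor_remainder_sign_of_cos (fun _ => ih) hy
    rw [pow_succ]
    linarith

open Finset Nat in
/-- On `[0, ∞)`, the error of the Taylor polynomial of `sin` with `n + 1` terms has the sign
of the first omitted term. -/
lemma sin_taylor_remainder_sign (n : ℕ) {x : ℝ} (hx : 0 ≤ x) :
    0 ≤ (-1) ^ (n + 1) *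
      (Real.sin x - ∑ k ∈ range (n + 1), (-1) ^ k * x ^ (2 * k + 1) / (2 * k + 1)!) :=
  sin_taylor_remainder_sign_of_cos (fun _ => cos_taylor_remainder_sign n) hx

/-- For `0 < r ≤ 1`, `(−1 + 4r² + cos 4r + r sin 4r)/(32r²) ≥ (4r⁴/45)(1 − 4r²/7)`. -/
theorem trig_moment_poly_lower_bound (r : ℝ) (hr : 0 < r) (hr1 : r ≤ 1) :
    (4 * r ^ 4 / 45) * (1 - 4 * r ^ 2 / 7) ≤
      (-1 + 4 * r ^ 2 + Real.cos (4 * r) + r * Real.sin (4 * r)) / (32 * r ^ 2) := by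
  have hc := cos_taylor_remainder_sign 5 (x := 4 * r) (by positivity)
  have hs := mul_nonneg hr.le (sin_taylor_remainder_sign 5 (x := 4 * r) (by positivity))
  simp only [Finset.sum_range_succ, Finset.sum_range_zero, Nat.factorial] at hc hs
  have hr12 : r ^ 12 ≤ r ^ 10 := pow_le_pow_of_le_one hr.le hr1 (by norm_num)
  have hr10 : 0 < r ^ 10 := by positivity
  rw [le_div_iff₀ (by positivity)]
  norm_num at hc hs
  ring_nf at hc hs ⊢
  linarith
end

section
/- Let σ be an N×N complex matrix that is Hermitian and satisfies σ² = I (a Hermitian involution), let ρ be an N×N positive semidefinite Hermitian matrix, let ψ ∈ ℂ^N be a unit vector, and let r > 0. For α ∈ ℝ define U(α) = cos(α)·I − i·sin(α)·σ. Then the variance of α ↦ ⟨ψ, U(α)† ρ U(α) ψ⟩ over α uniform on [−r, r] is at least (c_+ − k_+²)·(⟨ψ, ρ ψ⟩ − ⟨ψ, σρσ ψ⟩)², where c_+ = (1/(2r))∫_{−r}^{r} cos⁴α dα and k_+ = (1/(2r))∫_{−r}^{r} cos²α dα. -/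
open Matrix MeasureTheory ProbabilityTheory
open scoped ComplexOrder

/-- Adding a centred variable uncorrelated with `X` does not decrease the variance. -/
lemma variance_le_variance_add_of_integral_eq_zero {Ω : Type*} [MeasurableSpace Ω]
    {μ : Measure Ω} [IsProbabilityMeasure μ] {X Y : Ω → ℝ} (hX : MemLp X 2 μ) (hY : MemLp Y 2 μ)
    (hY0 : ∫ ω, Y ω ∂μ = 0) (hXY : ∫ ω, X ω * Y ω ∂μ = 0) :
    variance X μ ≤ variance (X + Y) μ := by
  have hcov : covariance X Y μ = 0 := by
    rw [covariance_eq_sub hX hY, hY0, mul_zero, sub_zero]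
    exact hXY
  rw [variance_add hX hY, hcov]
  linarith [variance_nonneg Y μ]

lemma intervalIntegral_eq_zero_of_odd {f : ℝ → ℝ} (hf : ∀ x, f (-x) = -f x) (r : ℝ) :
    ∫ x in (-r)..r, f x = 0 := by
  have h := intervalIntegral.integral_comp_neg (a := -r) (b := r) f
  simp only [hf, intervalIntegral.integral_neg, neg_neg] at h
  linarith

lemma integral_uniform_Icc {r : ℝ} (hr : 0 < r) (f : ℝ → ℝ) :
    ∫ x, f x ∂((ENNReal.ofReal (2 * r))⁻¹ • volume.restrict (Set.Icc (-r) r)) =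
      (1 / (2 * r)) * ∫ x in (-r)..r, f x := by
  rw [integral_smul_measure, integral_Icc_eq_integral_Ioc,
    ← intervalIntegral.integral_of_le (by linarith), ENNReal.toReal_inv,
    ENNReal.toReal_ofReal (by positivity), smul_eq_mul, one_div]

lemma isProbabilityMeasure_uniform_Icc {r : ℝ} (hr : 0 < r) :
    IsProbabilityMeasure
      ((ENNReal.ofReal (2 * r))⁻¹ • volume.restrict (Set.Icc (-r) r) : Measure ℝ) := by
  constructor
  have h : r - -r = 2 * r := by ring
  rw [Measure.smul_apply, Measure.restrict_apply_univ, Real.volume_Icc, h, smul_eq_mul]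
  exact ENNReal.inv_mul_cancel (by simpa using hr) ENNReal.ofReal_ne_top

/-- The expectation of `ρ` after a rotation generated by a Hermitian matrix `σ`. -/
lemma re_expectation_rotation {N : ℕ} {σ : Matrix (Fin N) (Fin N) ℂ} (hσ : σ.IsHermitian)
    (ρ : Matrix (Fin N) (Fin N) ℂ) (ψ : Fin N → ℂ) (c s : ℝ) :
    (star ψ ⬝ᵥ ((((c : ℂ) • (1 : Matrix (Fin N) (Fin N) ℂ) - (Complex.I * (s : ℂ)) • σ)ᴴ * ρ *
        ((c : ℂ) • (1 : Matrix (Fin N) (Fin N) ℂ) - (Complex.I * (s : ℂ)) • σ)) *ᵥ ψ)).re =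
      c ^ 2 * (star ψ ⬝ᵥ (ρ *ᵥ ψ)).re + s ^ 2 * (star ψ ⬝ᵥ ((σ * ρ * σ) *ᵥ ψ)).re +
        (star ψ ⬝ᵥ ((Complex.I • (σ * ρ - ρ * σ)) *ᵥ ψ)).re * (s * c) := by
  have hmat : ((c : ℂ) • (1 : Matrix (Fin N) (Fin N) ℂ) - (Complex.I * (s : ℂ)) • σ)ᴴ * ρ *
      ((c : ℂ) • (1 : Matrix (Fin N) (Fin N) ℂ) - (Complex.I * (s : ℂ)) • σ) =
      ((c ^ 2 : ℝ) : ℂ) • ρ + ((s ^ 2 : ℝ) : ℂ) • (σ * ρ * σ) +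
        ((s * c : ℝ) : ℂ) • (Complex.I • (σ * ρ - ρ * σ)) := by
    simp only [conjTranspose_sub, conjTranspose_smul, conjTranspose_one, hσ.eq, star_mul',
      Complex.star_def, Complex.conj_I, Complex.conj_ofReal, sub_mul, mul_sub, smul_mul_assoc,
      mul_smul_comm, one_mul, mul_one, smul_smul, smul_sub]
    push_cast
    match_scalars <;> ring_nf <;> simp
  rw [hmat]
  simp only [add_mulVec, smul_mulVec _ _ ψ, dotProduct_add, dotProduct_smul, smul_eq_mul,
    Complex.add_re, Complex.re_ofReal_mul]
  ring

/-- **Final integration step of the warm-start bound.** For a Hermitian involution `σ`, a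
positive semidefinite `ρ`, and a unit vector `ψ`, the variance over `α` uniform on `[−r, r]` of
`α ↦ ⟨ψ, U(α)† ρ U(α) ψ⟩` with `U(α) = cos α·I − i sin α·σ` is at least
`(c₊ − k₊²)(⟨ψ, ρψ⟩ − ⟨ψ, σρσψ⟩)²`. -/
theorem variance_final_step {N : ℕ} (σ ρ : Matrix (Fin N) (Fin N) ℂ)
    (hσ : σ.IsHermitian) (hσ2 : σ * σ = 1) (hρ : ρ.PosSemidef)
    (ψ : Fin N → ℂ) (hψ : star ψ ⬝ᵥ ψ = 1) (r : ℝ) (hr : 0 < r)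
    (ν : Measure ℝ)
    (hν : ν = (ENNReal.ofReal (2 * r))⁻¹ • volume.restrict (Set.Icc (-r) r))
    (U : ℝ → Matrix (Fin N) (Fin N) ℂ)
    (hU : ∀ α, U α = (Real.cos α : ℂ) • (1 : Matrix (Fin N) (Fin N) ℂ)
      - (Complex.I * (Real.sin α : ℂ)) • σ) :
    (((1 / (2 * r)) * ∫ α in (-r)..r, Real.cos α ^ 4) -
        ((1 / (2 * r)) * ∫ α in (-r)..r, Real.cos α ^ 2) ^ 2) *
      ((star ψ ⬝ᵥ (ρ *ᵥ ψ)).re - (star ψ ⬝ᵥ ((σ * ρ * σ) *ᵥ ψ)).re) ^ 2 ≤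
    variance (fun α => (star ψ ⬝ᵥ (((U α)ᴴ * ρ * U α) *ᵥ ψ)).re) ν := by
  have hprob : IsProbabilityMeasure ν := hν ▸ isProbabilityMeasure_uniform_Icc hr
  have hint (f : ℝ → ℝ) : ∫ x, f x ∂ν = (1 / (2 * r)) * ∫ x in (-r)..r, f x :=
    hν ▸ integral_uniform_Icc hr f
  set A := (star ψ ⬝ᵥ (ρ *ᵥ ψ)).re
  set B := (star ψ ⬝ᵥ ((σ * ρ * σ) *ᵥ ψ)).re
  set C := (star ψ ⬝ᵥ ((Complex.I • (σ * ρ - ρ * σ)) *ᵥ ψ)).re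
  let X : ℝ → ℝ := fun α => (A - B) * Real.cos α ^ 2 + B
  let Y : ℝ → ℝ := fun α => C * (Real.sin α * Real.cos α)
  have hsplit : (fun α => (star ψ ⬝ᵥ (((U α)ᴴ * ρ * U α) *ᵥ ψ)).re) = X + Y := by
    funext α
    rw [hU, re_expectation_rotation hσ, Real.sin_sq]
    simp only [Pi.add_apply, X, Y, A, B, C]
    ring
  have hcos : MemLp (fun α : ℝ => Real.cos α ^ 2) 2 ν :=
    MemLp.of_bound (by fun_prop) 1 (.of_forall fun α => by
      simpa using Real.abs_cos_le_one α)
  have hX : MemLp X 2 ν := (hcos.const_mul (A - B)).add (memLp_const B)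
  have hY : MemLp Y 2 ν := by
    refine MemLp.const_mul (MemLp.of_bound (by fun_prop) 1 (.of_forall fun α => ?_)) C
    rw [norm_mul]
    exact mul_le_one₀ (Real.abs_sin_le_one α) (norm_nonneg _) (Real.abs_cos_le_one α)
  have hvarX : variance X ν =
      (((1 / (2 * r)) * ∫ α in (-r)..r, Real.cos α ^ 4) -
        ((1 / (2 * r)) * ∫ α in (-r)..r, Real.cos α ^ 2) ^ 2) * (A - B) ^ 2 := by
    rw [variance_add_const (hcos.const_mul (A - B)).aestronglyMeasurable, variance_const_mul,
      variance_eq_sub hcos, hint, mul_comm]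
    simp only [Pi.pow_apply, ← pow_mul]
    rw [hint]
  rw [hsplit, ← hvarX]
  refine variance_le_variance_add_of_integral_eq_zero hX hY ?_ ?_
  · rw [hint, intervalIntegral_eq_zero_of_odd (fun α => by simp [Y]), mul_zero]
  · rw [hint, intervalIntegral_eq_zero_of_odd (fun α => by simp [X, Y]), mul_zero]
end
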